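/- Let d ≥ 1. There exists a constant C depending only on d such that for every g ∈ C_c^∞(ℝ^d): ∫_{ℝ^d} ⟨v⟩^{−1} g(v)² dv ≤ C ( ∫_{ℝ^d} ⟨v⟩^{−3} |v|² g(v)² dv + ∫_{ℝ^d} ⟨v⟩^{−3} |∇g(v)|² dv ). -/

import Mathlib

/-!
Since `⟨v⟩⁻¹ = ⟨v⟩⁻³ (1 + |v|²)`, only the integral of `⟨v⟩⁻³ g²` has to be controlled. Fix a unit
vector `e` and put `F v = ⟨e, v⟩ ⟨v⟩⁻³`, whose derivative along `e` is
`⟨v⟩⁻³ - 3 ⟨e, v⟩² ⟨v⟩⁻⁵` (`hasLineDerivAt_weight`). The derivative of `F g²` along `e` has zero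
integral, while pointwise, by Cauchy–Schwarz and Young's inequality
`-2 ⟨e, v⟩ g ∂ₑg ≤ |v|² g² + |∇g|²`,
`⟨v⟩⁻¹ g² ≤ ∂ₑ(F g²) + 5 (⟨v⟩⁻³ |v|² g² + ⟨v⟩⁻³ |∇g|²)` (`pointwise_bound`).
Integrating gives the claim with the constant `5`.
-/

open MeasureTheory

/-- The Japanese bracket `⟨v⟩ = (1 + |v|²)^{1/2}`. -/
noncomputable def jap {d : ℕ} (v : EuclideanSpace ℝ (Fin d)) : ℝ :=
  Real.sqrt (1 + ‖v‖ ^ 2)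

lemma jap_pos {d : ℕ} (v : EuclideanSpace ℝ (Fin d)) : 0 < jap v :=
  Real.sqrt_pos.2 (by positivity)

lemma jap_sq {d : ℕ} (v : EuclideanSpace ℝ (Fin d)) : jap v ^ 2 = 1 + ‖v‖ ^ 2 :=
  Real.sq_sqrt (by positivity)

lemma continuous_jap {d : ℕ} : Continuous (jap (d := d)) := by
  unfold jap
  fun_prop

lemma hasLineDerivAt_weight {d : ℕ} (e v : EuclideanSpace ℝ (Fin d)) (he : ‖e‖ = 1) :
    HasLineDerivAt ℝ (fun v => inner ℝ e v * ((jap v) ^ 3)⁻¹)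
      (((jap v) ^ 3)⁻¹ - 3 * inner ℝ e v ^ 2 * ((jap v) ^ 5)⁻¹) v e := by
  unfold HasLineDerivAt
  have hee : inner ℝ e e = (1 : ℝ) := by rw [real_inner_self_eq_norm_sq, he]; norm_num
  have hx : ∀ t : ℝ, inner ℝ e (v + t • e) = inner ℝ e v + t := fun t => by
    rw [inner_add_right, inner_smul_right, hee, mul_one]
  have hj : ∀ t : ℝ, jap (v + t • e)
      = Real.sqrt (1 + (‖v‖ ^ 2 + 2 * inner ℝ e v * t + t ^ 2)) := fun t => by
    unfold jap
    rw [norm_add_sq_real, inner_smul_right, norm_smul, he, real_inner_comm, Real.norm_eq_abs,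
      mul_one, sq_abs]
    congr 1
    ring
  have hv : Real.sqrt (1 + (‖v‖ ^ 2 + 2 * inner ℝ e v * (0 : ℝ) + 0 ^ 2)) = jap v := by
    rw [← hj, zero_smul, add_zero]
  have hJ := jap_pos v
  simp only [hx, hj]
  have h1 : HasDerivAt (fun t : ℝ => 1 + (‖v‖ ^ 2 + 2 * inner ℝ e v * t + t ^ 2))
      (2 * inner ℝ e v) 0 := by
    have := ((((hasDerivAt_id (0 : ℝ)).const_mul (2 * inner ℝ e v)).const_add (‖v‖ ^ 2)).add
      ((hasDerivAt_id (0 : ℝ)).pow 2)).const_add 1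
    exact this.congr_deriv (by simp)
  have h2 := h1.sqrt (by
    intro h
    rw [h, Real.sqrt_zero] at hv
    exact hJ.ne hv)
  have h3 := ((hasDerivAt_id (0 : ℝ)).const_add (inner ℝ e v)).mul
    ((h2.pow 3).inv (by rw [Pi.pow_apply, hv]; positivity))
  refine h3.congr_deriv ?_
  simp only [Pi.pow_apply, Pi.inv_apply, hv, id]
  field_simp
  ring

/-- The pointwise inequality between integrands, as real algebra. Here `J = ⟨v⟩`, `x = ⟨e, v⟩`,
`r = |v|`, `γ = g v`, `D = ∂ₑg v` and `G = |∇g v|`; the first bracket on the right is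
`∂ₑ(F g²)` with `F v = ⟨e, v⟩ ⟨v⟩⁻³`. -/
lemma pointwise_bound {J x r γ D G : ℝ} (hJ : 0 < J) (hJr : J ^ 2 = 1 + r ^ 2)
    (hx : x ^ 2 ≤ r ^ 2) (hD : D ^ 2 ≤ G ^ 2) :
    J⁻¹ * γ ^ 2 ≤ ((x * (J ^ 3)⁻¹) * (2 * γ * D) + ((J ^ 3)⁻¹ - 3 * x ^ 2 * (J ^ 5)⁻¹) * γ ^ 2)
      + 5 * ((J ^ 3)⁻¹ * r ^ 2 * γ ^ 2 + (J ^ 3)⁻¹ * G ^ 2) := by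
  have h1 : J⁻¹ = (J ^ 3)⁻¹ * (1 + r ^ 2) := by
    rw [← hJr]; field_simp
  have h5 : (J ^ 5)⁻¹ ≤ (J ^ 3)⁻¹ := by
    have : 1 ≤ J := by nlinarith [sq_nonneg r]
    gcongr
    norm_num
  have hw : 0 < (J ^ 3)⁻¹ := by positivity
  have h6 : 3 * x ^ 2 * (J ^ 5)⁻¹ * γ ^ 2 ≤ 3 * r ^ 2 * (J ^ 3)⁻¹ * γ ^ 2 := by gcongr
  rw [h1]
  generalize (J ^ 3)⁻¹ = w at *
  -- The square `(x γ + D) ^ 2` absorbs the cross term `2 x γ D`.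
  have h7 : 0 ≤ w * ((x * γ + D) ^ 2 + (r ^ 2 - x ^ 2) * γ ^ 2 + (G ^ 2 - D ^ 2) + 4 * G ^ 2) := by
    have := mul_nonneg (sub_nonneg.2 hx) (sq_nonneg γ)
    have := sub_nonneg.2 hD
    positivity
  linarith

/-- **Weighted Poincaré-type inequality:** for `d ≥ 1` there is a constant `C`,
depending only on `d`, such that every `g ∈ C_c^∞(ℝ^d)` satisfies
`∫ ⟨v⟩⁻¹ g² ≤ C (∫ ⟨v⟩⁻³ |v|² g² + ∫ ⟨v⟩⁻³ |∇g|²)`. -/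
theorem weighted_poincare (d : ℕ) (hd : 1 ≤ d) :
    ∃ C : ℝ, ∀ g : EuclideanSpace ℝ (Fin d) → ℝ,
      ContDiff ℝ (⊤ : ℕ∞) g → HasCompactSupport g →
      (∫ v : EuclideanSpace ℝ (Fin d), (jap v)⁻¹ * g v ^ 2)
        ≤ C * ((∫ v : EuclideanSpace ℝ (Fin d), ((jap v) ^ 3)⁻¹ * ‖v‖ ^ 2 * g v ^ 2)
            + ∫ v : EuclideanSpace ℝ (Fin d), ((jap v) ^ 3)⁻¹ * ‖gradient g v‖ ^ 2) := by
  refine ⟨5, fun g hg hc => ?_⟩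
  let e : EuclideanSpace ℝ (Fin d) := EuclideanSpace.single ⟨0, hd⟩ 1
  have he : ‖e‖ = 1 := by simp [e]
  have hgc : Continuous g := hg.continuous
  have hdc : Continuous (fderiv ℝ g) := hg.continuous_fderiv (by simp)
  have hdec : Continuous fun v => fderiv ℝ g v e := hdc.clm_apply continuous_const
  have hgrad : Continuous (gradient g) := (LinearIsometryEquiv.continuous _).comp hdc
  have hJc := continuous_jap (d := d)
  have hJ0 : ∀ v : EuclideanSpace ℝ (Fin d), jap v ≠ 0 := fun v => (jap_pos v).ne'
  have hJinv : ∀ n : ℕ, Continuous fun v : EuclideanSpace ℝ (Fin d) => ((jap v) ^ n)⁻¹ :=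
    fun n => (hJc.pow n).inv₀ fun v => pow_ne_zero n (hJ0 v)
  -- Every integrand is continuous and vanishes off the support of `g`.
  have hint : ∀ f : EuclideanSpace ℝ (Fin d) → ℝ, Continuous f →
      (∀ v, v ∉ tsupport g → f v = 0) → Integrable f := fun f hf h0 =>
    hf.integrable_of_hasCompactSupport (HasCompactSupport.intro hc h0)
  have hg0 : ∀ v, v ∉ tsupport g → g v = 0 := fun v => image_eq_zero_of_notMem_tsupport
  have hd0 : ∀ v, v ∉ tsupport g → fderiv ℝ g v = 0 := fun v hv =>
    image_eq_zero_of_notMem_tsupport fun h => hv (tsupport_fderiv_subset ℝ h)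
  have hin : Continuous fun v : EuclideanSpace ℝ (Fin d) => (inner ℝ e v : ℝ) := by fun_prop
  have i1 : Integrable fun v => (inner ℝ e v * ((jap v) ^ 3)⁻¹) * (2 * g v * fderiv ℝ g v e) :=
    hint _ ((hin.mul (hJinv 3)).mul ((continuous_const.mul hgc).mul hdec))
      fun v hv => by simp [hg0 v hv]
  have i2 : Integrable fun v =>
      (((jap v) ^ 3)⁻¹ - 3 * inner ℝ e v ^ 2 * ((jap v) ^ 5)⁻¹) * g v ^ 2 :=
    hint _ (((hJinv 3).sub ((continuous_const.mul (hin.pow 2)).mul (hJinv 5))).mul (hgc.pow 2))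
      fun v hv => by simp [hg0 v hv]
  have i3 : Integrable fun v => (inner ℝ e v * ((jap v) ^ 3)⁻¹) * g v ^ 2 :=
    hint _ ((hin.mul (hJinv 3)).mul (hgc.pow 2)) fun v hv => by simp [hg0 v hv]
  have i4 : Integrable fun v => ((jap v) ^ 3)⁻¹ * ‖v‖ ^ 2 * g v ^ 2 :=
    hint _ (((hJinv 3).mul (continuous_norm.pow 2)).mul (hgc.pow 2))
      fun v hv => by simp [hg0 v hv]
  have i5 : Integrable fun v => ((jap v) ^ 3)⁻¹ * ‖gradient g v‖ ^ 2 :=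
    hint _ ((hJinv 3).mul (hgrad.norm.pow 2)) fun v hv => by simp [gradient, hd0 v hv]
  have i6 : Integrable fun v => (jap v)⁻¹ * g v ^ 2 :=
    hint _ ((hJc.inv₀ hJ0).mul (hgc.pow 2)) fun v hv => by simp [hg0 v hv]
  have ibp : ∫ v, (inner ℝ e v * ((jap v) ^ 3)⁻¹) * (2 * g v * fderiv ℝ g v e)
      = -∫ v, (((jap v) ^ 3)⁻¹ - 3 * inner ℝ e v ^ 2 * ((jap v) ^ 5)⁻¹) * g v ^ 2 := by
    refine integral_bilinear_hasLineDerivAt_right_eq_neg_left_of_integrable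
      (B := ContinuousLinearMap.mul ℝ ℝ) (v := e) (g := fun v => g v ^ 2) i2 i1 i3
      (fun v _ => hasLineDerivAt_weight e v he) fun v _ => ?_
    have h := ((hg.differentiable (by simp)) v).hasFDerivAt.hasLineDerivAt e
    have h' := HasDerivAt.pow (show HasDerivAt (fun t : ℝ => g (v + t • e)) _ 0 from h) 2
    exact h'.congr_deriv (by simp)
  have hpt : ∀ v, (jap v)⁻¹ * g v ^ 2 ≤
      ((inner ℝ e v * ((jap v) ^ 3)⁻¹) * (2 * g v * fderiv ℝ g v e)
        + (((jap v) ^ 3)⁻¹ - 3 * inner ℝ e v ^ 2 * ((jap v) ^ 5)⁻¹) * g v ^ 2)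
      + 5 * (((jap v) ^ 3)⁻¹ * ‖v‖ ^ 2 * g v ^ 2 + ((jap v) ^ 3)⁻¹ * ‖gradient g v‖ ^ 2) := by
    intro v
    refine pointwise_bound (jap_pos v) (jap_sq v) ?_ ?_
    · have := abs_real_inner_le_norm e v
      rw [he, one_mul] at this
      exact sq_le_sq' (neg_le_of_abs_le this) (le_of_abs_le this)
    · have := abs_real_inner_le_norm (gradient g v) e
      rw [he, mul_one, inner_gradient_left] at this
      exact sq_le_sq' (neg_le_of_abs_le this) (le_of_abs_le this)
  refine (integral_mono i6 ((i1.add i2).add ((i4.add i5).const_mul 5)) hpt).trans_eq ?_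
  rw [integral_add' (i1.add i2) ((i4.add i5).const_mul 5), integral_add' i1 i2,
    integral_const_mul, integral_add' i4 i5, ibp]
  ring
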